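/- Let n, m be positive integers with 1/2 ≤ m/n < 1 and n > 8000. Then the minimum of ρ_DB(A,B) over all pairs of disjoint nonempty finite sets A, B ⊆ ℤ² with |A| = n and |B| = m satisfies ⌈2√(6(n+m))⌉ ≤ min ρ_DB(A,B) ≤ ⌈2√(6(n+m))⌉ + 2. -/

import Mathlib

/-!
**Lower bound.** Write `a₁, a₂` (resp. `b₁, b₂`) for the numbers of nonempty columns and rows of
`A` (resp. `B`), and `x`, `y` for the numbers of columns and rows that meet both sets. A finite set
has at least two boundary edges in each nonempty row and column (`two_mul_proj_le_edgeP`), and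
`2 ρ = P(A) + P(B) + P(A ∪ B)` (`two_mul_rhoDB`), so `ρ ≥ 2(a₁ + a₂ + b₁ + b₂) - x - y`. The sets lie
in two combinatorial boxes, which gives `n ≤ a₁a₂`, `m ≤ b₁b₂` and `n + m ≤ a₁a₂ + b₁b₂ - xy`.
What remains is an optimisation over real numbers (`real_bound`). Moving `x` and `y` apart with
fixed sum decreases `xy`, so one of them may be taken extremal; then the objective is linear in the
other one, and at its two endpoints the configuration is either a box inside a corner of a
rectangle, or two stacked boxes. The second case is extremal, and it is there that `n ≤ 2m` and
`m ≤ 2n` enter (`stacked_bound`).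

**Upper bound.** Fill columns of height `h` one after the other, the first `n` cells going to `A`
and the next `m` to `B`. If `n + m ≤ w h` the outer perimeter is at most `2(w + h)` and the interface
has at most `h + 1` edges, for a total of `2w + 3h + 1`. With `k = ⌈2√(6(n + m))⌉`, one can solve
`2w + 3h = k + 1` with `|6h - (k + 1)| ≤ 6`; then `24 w h ≥ (k + 1)² - 36 ≥ k² ≥ 24(n + m)`.
-/

/-- The four lattice neighbors of a point in `ℤ × ℤ` (the points at `ℓ¹` distance 1). -/
def nbrs (u : ℤ × ℤ) : Finset (ℤ × ℤ) :=
  {(u.1 + 1, u.2), (u.1 - 1, u.2), (u.1, u.2 + 1), (u.1, u.2 - 1)}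

/-- Edge perimeter of a finite subset of `ℤ × ℤ`: the number of unordered pairs
`{u, v}` with `‖u - v‖₁ = 1` and exactly one of `u, v` in `A` (counted via the
endpoint lying in `A`). -/
def edgeP (A : Finset (ℤ × ℤ)) : ℕ :=
  ∑ u ∈ A, ((nbrs u).filter (fun v => v ∉ A)).card

/-- Number of unordered pairs `{u, v}` with `‖u - v‖₁ = 1`, `u ∈ A`, `v ∈ B`. -/
def crossE (A B : Finset (ℤ × ℤ)) : ℕ :=
  ∑ u ∈ A, ((nbrs u).filter (fun v => v ∈ B)).card

/-- Discrete double bubble perimeter: `P(A ∪ B) + e(A, B)`, so the shared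
boundary is counted once. -/
def rhoDB (A B : Finset (ℤ × ℤ)) : ℕ := edgeP (A ∪ B) + crossE A B

/-! ### Counting boundary edges by direction -/

lemma card_filter_nbrs (u : ℤ × ℤ) (p : ℤ × ℤ → Prop) [DecidablePred p] :
    ((nbrs u).filter p).card =
      (if p (u.1 + 1, u.2) then 1 else 0) + (if p (u.1 - 1, u.2) then 1 else 0)
      + (if p (u.1, u.2 + 1) then 1 else 0) + (if p (u.1, u.2 - 1) then 1 else 0) := by
  rw [Finset.card_filter, nbrs, Finset.sum_insert, Finset.sum_insert, Finset.sum_insert,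
    Finset.sum_singleton]
  · ring
  all_goals
    simp only [Finset.mem_insert, Finset.mem_singleton, Prod.mk.injEq]
    omega

lemma sum_card_filter_nbrs (S : Finset (ℤ × ℤ)) (p : ℤ × ℤ → Prop) [DecidablePred p] :
    ∑ u ∈ S, ((nbrs u).filter p).card =
      (S.filter fun u => p (u.1 + 1, u.2)).card + (S.filter fun u => p (u.1 - 1, u.2)).card
      + (S.filter fun u => p (u.1, u.2 + 1)).card
      + (S.filter fun u => p (u.1, u.2 - 1)).card := by
  simp only [card_filter_nbrs, Finset.sum_add_distrib]
  simp only [Finset.card_filter]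

/-- Every nonempty fibre of `f` on `S` has an element maximising `g`, and stepping from it by `s`,
which preserves `f` and increases `g`, leaves `S`. -/
lemma card_image_le_card_exit (S : Finset (ℤ × ℤ)) (f g : ℤ × ℤ → ℤ) (s : ℤ × ℤ → ℤ × ℤ)
    (hf : ∀ u, f (s u) = f u) (hg : ∀ u, g u < g (s u)) :
    (S.image f).card ≤ (S.filter fun u => s u ∉ S).card := by
  refine (Finset.card_le_card ?_).trans
    (Finset.card_image_le (s := S.filter fun u => s u ∉ S) (f := f))
  intro c hc
  obtain ⟨u, hu, rfl⟩ := Finset.mem_image.1 hc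
  obtain ⟨v, hv, hmax⟩ := (S.filter fun v => f v = f u).exists_max_image g ⟨u, by simp [hu]⟩
  rw [Finset.mem_filter] at hv
  refine Finset.mem_image.2 ⟨v, Finset.mem_filter.2 ⟨hv.1, fun hs => ?_⟩, hv.2⟩
  have := hmax (s v) (Finset.mem_filter.2 ⟨hs, by rw [hf, hv.2]⟩)
  exact absurd (hg v) (not_lt.2 this)

lemma two_mul_proj_le_edgeP (S : Finset (ℤ × ℤ)) :
    2 * ((S.image Prod.fst).card + (S.image Prod.snd).card) ≤ edgeP S := by
  rw [edgeP, sum_card_filter_nbrs S (fun v => v ∉ S)]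
  have h1 := card_image_le_card_exit S Prod.snd Prod.fst (fun u => (u.1 + 1, u.2))
    (fun _ => rfl) (fun u => by simp)
  have h2 := card_image_le_card_exit S Prod.snd (fun u => -u.1) (fun u => (u.1 - 1, u.2))
    (fun _ => rfl) (fun u => by simp)
  have h3 := card_image_le_card_exit S Prod.fst Prod.snd (fun u => (u.1, u.2 + 1))
    (fun _ => rfl) (fun u => by simp)
  have h4 := card_image_le_card_exit S Prod.fst (fun u => -u.2) (fun u => (u.1, u.2 - 1))
    (fun _ => rfl) (fun u => by simp)
  omega

lemma mem_nbrs_comm (u v : ℤ × ℤ) : v ∈ nbrs u ↔ u ∈ nbrs v := by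
  obtain ⟨a, b⟩ := u
  obtain ⟨c, d⟩ := v
  simp only [nbrs, Finset.mem_insert, Finset.mem_singleton, Prod.mk.injEq]
  omega

lemma crossE_comm (A B : Finset (ℤ × ℤ)) : crossE A B = crossE B A := by
  have h := Finset.sum_card_bipartiteAbove_eq_sum_card_bipartiteBelow
    (s := A) (t := B) (fun u v => v ∈ nbrs u)
  have e1 : ∀ u, (nbrs u).filter (fun v => v ∈ B) =
      Finset.bipartiteAbove (fun u v => v ∈ nbrs u) B u := by
    intro u
    ext v
    simp [Finset.bipartiteAbove, and_comm]
  have e2 : ∀ v, (nbrs v).filter (fun u => u ∈ A) =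
      Finset.bipartiteBelow (fun u v => v ∈ nbrs u) A v := by
    intro v
    ext u
    simp [Finset.bipartiteBelow, and_comm, mem_nbrs_comm u v]
  simpa only [crossE, e1, e2] using h

/-- An edge leaving `A` either leaves `A ∪ B` or ends in `B`. -/
lemma edgeP_split (A B : Finset (ℤ × ℤ)) (hd : Disjoint A B) :
    edgeP A = ∑ u ∈ A, ((nbrs u).filter (fun v => v ∉ A ∪ B)).card + crossE A B := by
  rw [edgeP, crossE, ← Finset.sum_add_distrib]
  refine Finset.sum_congr rfl fun u _ => ?_
  rw [← Finset.card_union_of_disjoint]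
  · congr 1
    ext v
    simp only [Finset.mem_filter, Finset.mem_union]
    have : v ∈ A → v ∉ B := fun h => Finset.disjoint_left.1 hd h
    tauto
  · rw [Finset.disjoint_filter]
    intro v _ h1 h2
    exact h1 (Finset.mem_union_right _ h2)

lemma two_mul_rhoDB (A B : Finset (ℤ × ℤ)) (hd : Disjoint A B) :
    2 * rhoDB A B = edgeP A + edgeP B + edgeP (A ∪ B) := by
  have h1 := edgeP_split A B hd
  have h2 := edgeP_split B A hd.symm
  rw [Finset.union_comm B A, ← crossE_comm A B] at h2
  have h3 : edgeP (A ∪ B) = ∑ u ∈ A, ((nbrs u).filter (fun v => v ∉ A ∪ B)).card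
      + ∑ u ∈ B, ((nbrs u).filter (fun v => v ∉ A ∪ B)).card := by
    rw [edgeP, Finset.sum_union hd]
  rw [rhoDB]
  omega

/-! ### The real optimisation problem -/

/-- The cost of stacking a `q`-wide box of area `m` on a `p`-wide box of area `n`; the number `h`
normalises the total area by `3h² = 2(n + m)`, so that `6h = 2√(6(n + m))`. -/
lemma stacked_bound (p q n m h : ℝ) (hq : 0 < q) (hpq : q ≤ p) (hn : 0 < n) (hm : 0 < m)
    (hh : 0 < h) (hN : 3 * h ^ 2 = 2 * (n + m)) (hnm : n ≤ 2 * m) :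
    6 * h ≤ 2 * p + q + 2 * (n / p) + 2 * (m / q) := by
  have hp : 0 < p := hq.trans_le hpq
  -- Tangent line of `1 / r` at the optimal width `r = h`.
  have tangent : ∀ c r : ℝ, 0 < c → 0 < r → 2 * (c / h) - c * r / h ^ 2 ≤ c / r := by
    intro c r hc hr
    have : c / r - (2 * (c / h) - c * r / h ^ 2) = c * (r - h) ^ 2 / (r * h ^ 2) := by
      field_simp
      ring
    have : 0 ≤ c * (r - h) ^ 2 / (r * h ^ 2) := by positivity
    linarith
  have h1 := tangent n p hn hp
  have h2 := tangent m q hm hq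
  have h3 : 2 * p + q + 2 * (2 * (n / h) - n * p / h ^ 2) + 2 * (2 * (m / h) - m * q / h ^ 2)
      - 6 * h = (p - q) * (2 * m - h ^ 2) / h ^ 2 := by
    have : n = 3 * h ^ 2 / 2 - m := by linarith
    subst this
    field_simp
    ring
  have h4 : 0 ≤ (p - q) * (2 * m - h ^ 2) / h ^ 2 :=
    div_nonneg (mul_nonneg (by linarith) (by linarith)) (by positivity)
  linarith

/-- The cost of a `q`-wide box of area `m` in a corner of a `p`-wide box of area `n + m`. -/
lemma corner_bound (p q n m h : ℝ) (hp : 0 < p) (hq : 0 < q)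
    (hN : 3 * h ^ 2 = 2 * (n + m)) (hnm : n ≤ 2 * m) :
    6 * h ≤ 2 * p + q + 2 * ((n + m) / p) + m / q := by
  have h1 : 4.8 * h ≤ 2 * p + 2 * ((n + m) / p) := by
    have : 2 * p + 2 * ((n + m) / p) = (2 * p ^ 2 + 3 * h ^ 2) / p := by
      rw [hN]
      field_simp
    rw [this, le_div_iff₀ hp]
    nlinarith [sq_nonneg (p - 1.2 * h), sq_nonneg h]
  have h2 : 1.2 * h ≤ q + m / q := by
    have : q + m / q = (q ^ 2 + m) / q := by field_simp
    rw [this, le_div_iff₀ hq]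
    nlinarith [sq_nonneg (q - 0.6 * h), sq_nonneg h]
  linarith

/-- The case where the column overlap is the full width `q` of the narrower box; `t = Q - y` is the
part of its height that sticks out of the rows of the wider box. -/
lemma extremal_overlap_bound (p q P Q y n m h : ℝ) (hq : 0 < q) (hpq : q ≤ p) (hn : 0 < n)
    (hm : 0 < m) (hh : 0 < h) (hN : 3 * h ^ 2 = 2 * (n + m)) (hnm : n ≤ 2 * m)
    (hyQ : y ≤ Q) (hA : n ≤ p * P) (hB : m ≤ q * Q)
    (hAB : n + m ≤ p * P + q * Q - q * y) :
    6 * h ≤ 2 * (p + P + q + Q) - q - y := by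
  have hp : 0 < p := hq.trans_le hpq
  have hs := stacked_bound p q n m h hq hpq hn hm hh hN hnm
  have hc := corner_bound p q n m h hp hq hN hnm
  have hP : n / p ≤ P := by rw [div_le_iff₀ hp]; linarith
  have hQ : m / q ≤ Q := by rw [div_le_iff₀ hq]; linarith
  obtain ⟨t, ht⟩ : ∃ t, t = Q - y := ⟨_, rfl⟩
  by_cases hqt : m / q ≤ t
  · linarith
  · have hP' : (n + m - q * t) / p ≤ P := by
      rw [div_le_iff₀ hp]
      subst ht
      linarith
    -- `t` is the convex combination of `0` and `m / q` with weight `l = q t / m`.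
    obtain ⟨l, hl⟩ : ∃ l, l = q * t / m := ⟨_, rfl⟩
    have hl0 : 0 ≤ l := by
      rw [hl]
      have : 0 ≤ t := by linarith
      positivity
    have hl1 : l ≤ 1 := by
      rw [hl, div_le_one hm]
      have := (lt_div_iff₀ hq).1 (not_le.1 hqt)
      linarith
    have key : 2 * p + q + 2 * ((n + m - q * t) / p) + m / q + t
        = (1 - l) * (2 * p + q + 2 * ((n + m) / p) + m / q)
          + l * (2 * p + q + 2 * (n / p) + 2 * (m / q)) := by
      rw [hl]
      field_simp
      ring
    have : 6 * h ≤ (1 - l) * (2 * p + q + 2 * ((n + m) / p) + m / q)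
          + l * (2 * p + q + 2 * (n / p) + 2 * (m / q)) := by
      nlinarith
    linarith

/-- Under `y ≤ x`, raising `x` to `min a₁ b₁` and lowering `y` accordingly is harmless. -/
lemma real_bound_aux (a₁ a₂ b₁ b₂ x y n m h : ℝ) (hn : 0 < n) (hm : 0 < m) (hh : 0 < h)
    (hN : 3 * h ^ 2 = 2 * (n + m)) (hnm : n ≤ 2 * m) (hmn : m ≤ 2 * n)
    (ha₁ : 0 < a₁) (hb₁ : 0 < b₁) (hy : 0 ≤ y)
    (hxa : x ≤ a₁) (hxb : x ≤ b₁) (hya : y ≤ a₂) (hyb : y ≤ b₂)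
    (hA : n ≤ a₁ * a₂) (hB : m ≤ b₁ * b₂) (hAB : n + m ≤ a₁ * a₂ + b₁ * b₂ - x * y)
    (hyx : y ≤ x) :
    6 * h ≤ 2 * (a₁ + a₂ + b₁ + b₂) - x - y := by
  -- The modified overlap `max 0 (x + y - X)`, for `X` the larger column overlap.
  have move : ∀ X, x ≤ X → X * max 0 (x + y - X) ≤ x * y ∧ max 0 (x + y - X) ≤ y := by
    intro X hX
    refine ⟨?_, max_le hy (by linarith)⟩
    rcases max_cases 0 (x + y - X) with ⟨e, _⟩ | ⟨e, _⟩ <;> rw [e] <;> nlinarith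
  rcases le_total b₁ a₁ with hab | hab
  · obtain ⟨h1, h2⟩ := move b₁ hxb
    have h3 := le_max_right 0 (x + y - b₁)
    have := extremal_overlap_bound a₁ b₁ a₂ b₂ _ n m h hb₁ hab hn hm hh hN hnm
      (h2.trans hyb) hA hB (by linarith)
    linarith
  · obtain ⟨h1, h2⟩ := move a₁ hxa
    have h3 := le_max_right 0 (x + y - a₁)
    have := extremal_overlap_bound b₁ a₁ b₂ a₂ _ m n h ha₁ hab hm hn hh (by linarith) hmn
      (h2.trans hya) hB hA (by linarith)
    linarith

lemma real_bound (a₁ a₂ b₁ b₂ x y n m h : ℝ) (hn : 0 < n) (hm : 0 < m) (hh : 0 < h)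
    (hN : 3 * h ^ 2 = 2 * (n + m)) (hnm : n ≤ 2 * m) (hmn : m ≤ 2 * n)
    (ha₁ : 0 < a₁) (ha₂ : 0 < a₂) (hb₁ : 0 < b₁) (hb₂ : 0 < b₂) (hx : 0 ≤ x) (hy : 0 ≤ y)
    (hxa : x ≤ a₁) (hxb : x ≤ b₁) (hya : y ≤ a₂) (hyb : y ≤ b₂)
    (hA : n ≤ a₁ * a₂) (hB : m ≤ b₁ * b₂) (hAB : n + m ≤ a₁ * a₂ + b₁ * b₂ - x * y) :
    6 * h ≤ 2 * (a₁ + a₂ + b₁ + b₂) - x - y := by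
  rcases le_total y x with hyx | hyx
  · exact real_bound_aux a₁ a₂ b₁ b₂ x y n m h hn hm hh hN hnm hmn ha₁ hb₁ hy hxa hxb hya hyb
      hA hB hAB hyx
  · have := real_bound_aux a₂ a₁ b₂ b₁ y x n m h hn hm hh hN hnm hmn ha₂ hb₂ hx hya hyb hxa hxb
      (by linarith) (by linarith) (by linarith) hyx
    linarith

/-! ### The lower bound -/

lemma subset_proj (S : Finset (ℤ × ℤ)) : S ⊆ S.image Prod.fst ×ˢ S.image Prod.snd :=
  fun _ hu => Finset.mem_product.2 ⟨Finset.mem_image_of_mem _ hu, Finset.mem_image_of_mem _ hu⟩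

lemma sqrt_le_rhoDB (A B : Finset (ℤ × ℤ)) (hd : Disjoint A B) (hA : A.Nonempty)
    (hB : B.Nonempty) (hnm : A.card ≤ 2 * B.card) (hmn : B.card ≤ 2 * A.card) :
    2 * Real.sqrt (6 * ((A.card : ℝ) + B.card)) ≤ rhoDB A B := by
  set A₁ := A.image Prod.fst with hA₁
  set A₂ := A.image Prod.snd with hA₂
  set B₁ := B.image Prod.fst with hB₁
  set B₂ := B.image Prod.snd with hB₂
  have hrho := two_mul_rhoDB A B hd
  have pA := two_mul_proj_le_edgeP A
  have pB := two_mul_proj_le_edgeP B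
  have pC := two_mul_proj_le_edgeP (A ∪ B)
  rw [Finset.image_union, Finset.image_union, ← hA₁, ← hA₂, ← hB₁, ← hB₂] at pC
  rw [← hA₁, ← hA₂] at pA
  rw [← hB₁, ← hB₂] at pB
  have u1 := Finset.card_union_add_card_inter A₁ B₁
  have u2 := Finset.card_union_add_card_inter A₂ B₂
  have hF : 2 * (A₁.card + A₂.card + B₁.card + B₂.card)
      ≤ rhoDB A B + (A₁ ∩ B₁).card + (A₂ ∩ B₂).card := by
    omega
  have cA : A.card ≤ A₁.card * A₂.card := by
    simpa [Finset.card_product] using Finset.card_le_card (subset_proj A)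
  have cB : B.card ≤ B₁.card * B₂.card := by
    simpa [Finset.card_product] using Finset.card_le_card (subset_proj B)
  have cAB : A.card + B.card + (A₁ ∩ B₁).card * (A₂ ∩ B₂).card
      ≤ A₁.card * A₂.card + B₁.card * B₂.card := by
    have h1 := Finset.card_le_card (Finset.union_subset_union (subset_proj A) (subset_proj B))
    have h2 := Finset.card_union_add_card_inter (A₁ ×ˢ A₂) (B₁ ×ˢ B₂)
    rw [Finset.card_union_of_disjoint hd] at h1
    rw [Finset.product_inter_product, Finset.card_product, Finset.card_product,
      Finset.card_product] at h2
    rw [← hA₁, ← hA₂, ← hB₁, ← hB₂] at h1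
    omega
  have hApos : (0 : ℝ) < A.card := by exact_mod_cast hA.card_pos
  have hBpos : (0 : ℝ) < B.card := by exact_mod_cast hB.card_pos
  set r := Real.sqrt (6 * ((A.card : ℝ) + B.card)) with hr
  have hr0 : 0 < r := Real.sqrt_pos.2 (by positivity)
  have hr2 : r ^ 2 = 6 * ((A.card : ℝ) + B.card) := Real.sq_sqrt (by positivity)
  have := real_bound A₁.card A₂.card B₁.card B₂.card (A₁ ∩ B₁).card (A₂ ∩ B₂).card
    A.card B.card (r / 3) hApos hBpos (by positivity) (by linarith)
    (by exact_mod_cast hnm) (by exact_mod_cast hmn)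
    (by exact_mod_cast (hA.image _).card_pos) (by exact_mod_cast (hA.image _).card_pos)
    (by exact_mod_cast (hB.image _).card_pos) (by exact_mod_cast (hB.image _).card_pos)
    (by positivity) (by positivity)
    (by exact_mod_cast Finset.card_le_card Finset.inter_subset_left)
    (by exact_mod_cast Finset.card_le_card Finset.inter_subset_right)
    (by exact_mod_cast Finset.card_le_card Finset.inter_subset_left)
    (by exact_mod_cast Finset.card_le_card Finset.inter_subset_right)
    (by exact_mod_cast cA) (by exact_mod_cast cB)
    (by rw [le_sub_iff_add_le]; exact_mod_cast cAB)
  have hF' : 2 * ((A₁.card : ℝ) + A₂.card + B₁.card + B₂.card)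
      ≤ rhoDB A B + (A₁ ∩ B₁).card + (A₂ ∩ B₂).card := by
    exact_mod_cast hF
  linarith

/-! ### The construction -/

/-- The first `k` cells of the quadrant strip `{(i, j) | 0 ≤ i, 0 ≤ j < h}`, column after column:
cell number `t` is `(t / h, t % h)`. -/
def colFill (h k : ℕ) : Finset (ℤ × ℤ) :=
  (Finset.range k).image fun t => (((t / h : ℕ) : ℤ), ((t % h : ℕ) : ℤ))

lemma card_colFill (h k : ℕ) : (colFill h k).card = k := by
  rw [colFill, Finset.card_image_of_injective, Finset.card_range]
  intro s t hst
  simp only [Prod.mk.injEq, Nat.cast_inj] at hst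
  rw [← Nat.div_add_mod s h, ← Nat.div_add_mod t h, hst.1, hst.2]

lemma mem_colFill {h : ℕ} (hh : 0 < h) (k : ℕ) (u : ℤ × ℤ) :
    u ∈ colFill h k ↔ 0 ≤ u.1 ∧ 0 ≤ u.2 ∧ u.2 < h ∧ h * u.1 + u.2 < k := by
  obtain ⟨i, j⟩ := u
  simp only [colFill, Finset.mem_image, Finset.mem_range, Prod.mk.injEq]
  constructor
  · rintro ⟨t, ht, rfl, rfl⟩
    have h1 := Nat.mod_lt t hh
    have h2 := Nat.div_add_mod t h
    refine ⟨by positivity, by positivity, by exact_mod_cast h1, ?_⟩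
    have : h * (t / h) + t % h < k := by omega
    exact_mod_cast this
  · rintro ⟨h1, h2, h3, h4⟩
    lift i to ℕ using h1
    lift j to ℕ using h2
    have h3' : j < h := by exact_mod_cast h3
    refine ⟨h * i + j, by exact_mod_cast h4, ?_, ?_⟩
    · rw [Nat.mul_add_div hh, Nat.div_eq_of_lt h3', add_zero]
    · rw [Nat.mul_add_mod, Nat.mod_eq_of_lt h3']

/-- A set on which `f` is injective with values in `[0, c)` has at most `c` elements. -/
lemma card_le_of_injOn_range (T : Finset (ℤ × ℤ)) (f : ℤ × ℤ → ℤ) (c : ℕ)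
    (hf : ∀ u ∈ T, 0 ≤ f u ∧ f u < c) (hinj : ∀ u ∈ T, ∀ v ∈ T, f u = f v → u = v) :
    T.card ≤ c := by
  have := Finset.card_le_card_of_injOn (s := T) (t := Finset.Ico (0 : ℤ) c) f
    (fun u hu => by simpa using hf u hu) (fun u hu v hv => hinj u hu v hv)
  simpa using this

/-- Cells of two columns in the same row, whose numbers both lie in the window `[N - h, N)`. -/
lemma col_eq_of_window {h : ℕ} (N i i' j : ℤ) (h1 : h * i + j < N)
    (h2 : N ≤ h * (i + 1) + j) (h3 : h * i' + j < N) (h4 : N ≤ h * (i' + 1) + j) : i = i' := by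
  have a : (h : ℤ) * i < h * (i' + 1) := by linarith
  have b : (h : ℤ) * i' < h * (i + 1) := by linarith
  have := lt_of_mul_lt_mul_left a (by positivity)
  have := lt_of_mul_lt_mul_left b (by positivity)
  omega

lemma edgeP_colFill {h : ℕ} (hh : 0 < h) (N w : ℕ) (hN : N ≤ h * w) :
    edgeP (colFill h N) ≤ 2 * (w + h) := by
  rw [edgeP, sum_card_filter_nbrs _ (fun v => v ∉ colFill h N)]
  have hN' : (N : ℤ) ≤ h * w := by exact_mod_cast hN
  have hcol : ∀ i j : ℤ, 0 ≤ j → h * i + j < N → i < w := by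
    intro i j hj hij
    exact lt_of_mul_lt_mul_left (a := (h : ℤ)) (by linarith) (by positivity)
  have r : ((colFill h N).filter fun u => (u.1 + 1, u.2) ∉ colFill h N).card ≤ h := by
    refine card_le_of_injOn_range _ Prod.snd h ?_ ?_
    · rintro ⟨i, j⟩ hu
      simp only [Finset.mem_filter, mem_colFill hh] at hu
      exact ⟨hu.1.2.1, hu.1.2.2.1⟩
    · rintro ⟨i, j⟩ hu ⟨i', j'⟩ hv (rfl : j = j')
      simp only [Finset.mem_filter, mem_colFill hh] at hu hv
      rw [col_eq_of_window (h := h) N i i' j] <;> omega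
  have l : ((colFill h N).filter fun u => (u.1 - 1, u.2) ∉ colFill h N).card ≤ h := by
    refine card_le_of_injOn_range _ Prod.snd h ?_ ?_
    · rintro ⟨i, j⟩ hu
      simp only [Finset.mem_filter, mem_colFill hh] at hu
      exact ⟨hu.1.2.1, hu.1.2.2.1⟩
    · have zero : ∀ i j : ℤ, (i, j) ∈ (colFill h N).filter
          (fun u => (u.1 - 1, u.2) ∉ colFill h N) → i = 0 := by
        intro i j hu
        simp only [Finset.mem_filter, mem_colFill hh, mul_sub] at hu
        omega
      rintro ⟨i, j⟩ hu ⟨i', j'⟩ hv (rfl : j = j')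
      rw [zero i j hu, zero i' j hv]
  have t : ((colFill h N).filter fun u => (u.1, u.2 + 1) ∉ colFill h N).card ≤ w := by
    refine card_le_of_injOn_range _ Prod.fst w ?_ ?_
    · rintro ⟨i, j⟩ hu
      simp only [Finset.mem_filter, mem_colFill hh] at hu
      exact ⟨hu.1.1, hcol i j hu.1.2.1 hu.1.2.2.2⟩
    · rintro ⟨i, j⟩ hu ⟨i', j'⟩ hv (rfl : i = i')
      simp only [Finset.mem_filter, mem_colFill hh] at hu hv
      rw [Prod.mk.injEq]
      omega
  have b : ((colFill h N).filter fun u => (u.1, u.2 - 1) ∉ colFill h N).card ≤ w := by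
    refine card_le_of_injOn_range _ Prod.fst w ?_ ?_
    · rintro ⟨i, j⟩ hu
      simp only [Finset.mem_filter, mem_colFill hh] at hu
      exact ⟨hu.1.1, hcol i j hu.1.2.1 hu.1.2.2.2⟩
    · rintro ⟨i, j⟩ hu ⟨i', j'⟩ hv (rfl : i = i')
      simp only [Finset.mem_filter, mem_colFill hh] at hu hv
      rw [Prod.mk.injEq]
      omega
  omega

/-- The interface consists of at most `h` horizontal edges and the vertical edge joining the cells
numbered `n - 1` and `n`. -/
lemma crossE_colFill {h : ℕ} (hh : 0 < h) (n N : ℕ) :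
    crossE (colFill h n) (colFill h N \ colFill h n) ≤ h + 1 := by
  rw [crossE, sum_card_filter_nbrs _ (fun v => v ∈ colFill h N \ colFill h n)]
  have r : ((colFill h n).filter
      fun u => (u.1 + 1, u.2) ∈ colFill h N \ colFill h n).card ≤ h := by
    refine card_le_of_injOn_range _ Prod.snd h ?_ ?_
    · rintro ⟨i, j⟩ hu
      simp only [Finset.mem_filter, mem_colFill hh] at hu
      exact ⟨hu.1.2.1, hu.1.2.2.1⟩
    · rintro ⟨i, j⟩ hu ⟨i', j'⟩ hv (rfl : j = j')
      simp only [Finset.mem_filter, Finset.mem_sdiff, mem_colFill hh] at hu hv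
      rw [col_eq_of_window (h := h) n i i' j] <;> omega
  have l : ((colFill h n).filter
      fun u => (u.1 - 1, u.2) ∈ colFill h N \ colFill h n).card = 0 := by
    rw [Finset.card_eq_zero, Finset.filter_eq_empty_iff]
    rintro ⟨i, j⟩ hu
    simp only [Finset.mem_sdiff, mem_colFill hh, mul_sub] at hu ⊢
    omega
  have t : ((colFill h n).filter
      fun u => (u.1, u.2 + 1) ∈ colFill h N \ colFill h n).card ≤ 1 := by
    rw [Finset.card_le_one]
    rintro ⟨i, j⟩ hu ⟨i', j'⟩ hv
    simp only [Finset.mem_filter, Finset.mem_sdiff, mem_colFill hh] at hu hv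
    have e : (h : ℤ) * i + j = h * i' + j' := by omega
    have hi : i = i' := by
      have a : (h : ℤ) * i < h * (i' + 1) := by linarith
      have b : (h : ℤ) * i' < h * (i + 1) := by linarith
      have := lt_of_mul_lt_mul_left a (by positivity)
      have := lt_of_mul_lt_mul_left b (by positivity)
      omega
    subst hi
    rw [Prod.mk.injEq]
    omega
  have b : ((colFill h n).filter
      fun u => (u.1, u.2 - 1) ∈ colFill h N \ colFill h n).card = 0 := by
    rw [Finset.card_eq_zero, Finset.filter_eq_empty_iff]
    rintro ⟨i, j⟩ hu
    simp only [Finset.mem_sdiff, mem_colFill hh] at hu ⊢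
    omega
  omega

/-- Integers of the right parity near `(k + 1) / 6` and `(k + 1) / 4`. -/
lemma exists_box_dims (N k : ℕ) (hk : 24 * N ≤ k ^ 2) (hk18 : 18 ≤ k) :
    ∃ h w : ℕ, 0 < h ∧ N ≤ h * w ∧ 2 * w + 3 * h = k + 1 := by
  obtain ⟨h, w, h0, hs, h1, h2⟩ : ∃ h w : ℕ, 0 < h ∧ 2 * w + 3 * h = k + 1 ∧
      6 * h ≤ k + 1 + 6 ∧ k + 1 ≤ 6 * h + 6 := by
    by_cases hpar : (k + 1) / 6 % 2 = (k + 1) % 2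
    · exact ⟨(k + 1) / 6, (k + 1 - 3 * ((k + 1) / 6)) / 2, by omega, by omega, by omega, by omega⟩
    · exact ⟨(k + 1) / 6 + 1, (k + 1 - 3 * ((k + 1) / 6 + 1)) / 2, by omega, by omega, by omega,
        by omega⟩
  refine ⟨h, w, h0, ?_, hs⟩
  zify at *
  have e : 24 * ((h : ℤ) * w) = (k + 1) ^ 2 - (6 * h - (k + 1)) ^ 2 := by
    rw [← hs]
    ring
  have : (6 * (h : ℤ) - (k + 1)) ^ 2 ≤ 36 := by nlinarith
  nlinarith

theorem stmt2 (n m : ℕ) (hn : 0 < n) (hm : 0 < m)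
    (hlow : 1 / 2 ≤ (m : ℝ) / n) (hhigh : (m : ℝ) / n < 1) (hbig : n > 8000) :
    (∀ A B : Finset (ℤ × ℤ), Disjoint A B → A.Nonempty → B.Nonempty →
      A.card = n → B.card = m →
      ⌈2 * Real.sqrt (6 * ((n : ℝ) + m))⌉ ≤ (rhoDB A B : ℤ)) ∧
    (∃ A B : Finset (ℤ × ℤ), Disjoint A B ∧ A.Nonempty ∧ B.Nonempty ∧
      A.card = n ∧ B.card = m ∧
      (rhoDB A B : ℤ) ≤ ⌈2 * Real.sqrt (6 * ((n : ℝ) + m))⌉ + 2) := by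
  have hn' : (0 : ℝ) < n := by exact_mod_cast hn
  have hnm : n ≤ 2 * m := by
    rw [le_div_iff₀ hn'] at hlow
    have : (n : ℝ) ≤ 2 * m := by linarith
    exact_mod_cast this
  have hmn : m < n := by
    rw [div_lt_one hn'] at hhigh
    exact_mod_cast hhigh
  constructor
  · intro A B hd hA hB hcA hcB
    rw [Int.ceil_le, ← hcA, ← hcB]
    exact_mod_cast sqrt_le_rhoDB A B hd hA hB (by omega) (by omega)
  · obtain ⟨k, hk⟩ : ∃ k : ℕ, (k : ℤ) = ⌈2 * Real.sqrt (6 * ((n : ℝ) + m))⌉ :=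
      ⟨_, Int.toNat_of_nonneg (Int.ceil_nonneg (by positivity))⟩
    have hk24 : 24 * (n + m) ≤ k ^ 2 := by
      have h1 : 2 * Real.sqrt (6 * ((n : ℝ) + m)) ≤ k := by
        have := Int.le_ceil (2 * Real.sqrt (6 * ((n : ℝ) + m)))
        rw [← hk] at this
        exact_mod_cast this
      have h2 : Real.sqrt (6 * ((n : ℝ) + m)) ^ 2 = 6 * ((n : ℝ) + m) :=
        Real.sq_sqrt (by positivity)
      have h3 := Real.sqrt_nonneg (6 * ((n : ℝ) + m))
      have : 24 * ((n : ℝ) + m) ≤ (k : ℝ) ^ 2 := by nlinarith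
      exact_mod_cast this
    obtain ⟨h, w, h0, hN, hs⟩ := exists_box_dims (n + m) k hk24 (by nlinarith)
    have hsub : colFill h n ⊆ colFill h (n + m) := by
      intro u hu
      rw [mem_colFill h0] at hu ⊢
      push_cast
      omega
    have hcard : (colFill h (n + m) \ colFill h n).card = m := by
      rw [Finset.card_sdiff_of_subset hsub, card_colFill, card_colFill]
      omega
    refine ⟨colFill h n, colFill h (n + m) \ colFill h n, Finset.disjoint_sdiff,
      Finset.card_pos.1 (by rw [card_colFill]; exact hn),
      Finset.card_pos.1 (by rw [hcard]; exact hm), card_colFill h n, hcard, ?_⟩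
    have h1 := edgeP_colFill h0 (n + m) w hN
    have h2 := crossE_colFill h0 n (n + m)
    rw [← hk, rhoDB, Finset.union_sdiff_of_subset hsub]
    omega
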